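/- arXiv:0907.4894 — 2 statements merged into one kernel-verified Lean document; each statement's English description precedes it below -/
import Mathlib

section
/- For every complex number s with Re(s) > 1, ∑_{n=1}^∞ a₂(n)/n^s = (1 + 2^{-2s} + 2·2^{-3s}) (1 - 2^{-s}) ζ(s)² (1 - 2^{-2s})^{-1} ζ(2s)^{-1}, where ζ is the Riemann zeta function. -/
/-- `a₂ n` is the number of Dirichlet characters `χ` modulo `n` with values in `ℂ`
satisfying `χ ^ 2 = 1`. -/
noncomputable def a₂ (n : ℕ) : ℕ := Nat.card {χ : DirichletCharacter ℂ n // χ ^ 2 = 1}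

/-!
By duality for finite abelian groups, `a₂ n` is the number of square roots of `1` in `ZMod n`.
It is therefore multiplicative, equal to `2` at powers of odd primes, and equal to
`1, 1, 2, 4, 4, …` at `1, 2, 4, 8, 16, …`. With `x = p ^ (-s)`, the Euler factor at an odd prime is
`1 + 2 x / (1 - x) = (1 - x ^ 2) / (1 - x) ^ 2`, which is the factor of `ζ(s) ^ 2 / ζ(2s)`, and the
factor at `2` is `1 + x + 2 x ^ 2 + 4 x ^ 3 / (1 - x) = (1 + x ^ 2 + 2 x ^ 3) / (1 - x)`.
-/

open Finset

section RootsOfUnity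

theorem card_mulChar_pow_eq_one (M R : Type*) [CommMonoid M] [CommRing R] [Finite Mˣ]
    [HasEnoughRootsOfUnity R (Monoid.exponent Mˣ)] (k : ℕ) :
    Nat.card {χ : MulChar M R // χ ^ k = 1} = Nat.card (rootsOfUnity k M) := by
  obtain ⟨e⟩ := CommGroup.monoidHom_mulEquiv_of_hasEnoughRootsOfUnity Mˣ R
  let e' : MulChar M R ≃* Mˣ := MulChar.mulEquivToUnitHom.trans e
  refine Nat.card_congr (e'.toEquiv.subtypeEquiv fun χ => ?_)
  rw [mem_rootsOfUnity, MulEquiv.toEquiv_eq_coe, EquivLike.coe_coe, ← map_pow,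
    EmbeddingLike.map_eq_one_iff]

theorem card_rootsOfUnity_of_isCyclic (M : Type*) [CommMonoid M] [Finite Mˣ] [IsCyclic Mˣ]
    (k : ℕ) : Nat.card (rootsOfUnity k M) = (Nat.card Mˣ).gcd k :=
  IsCyclic.card_powMonoidHom_ker (G := Mˣ) k

theorem card_rootsOfUnity_prod (M N : Type*) [CommMonoid M] [CommMonoid N] (k : ℕ) :
    Nat.card (rootsOfUnity k (M × N)) =
      Nat.card (rootsOfUnity k M) * Nat.card (rootsOfUnity k N) := by
  rw [← Nat.card_prod]
  refine Nat.card_congr ((MulEquiv.prodUnits.toEquiv.subtypeEquiv fun u => ?_).trans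
    Equiv.subtypeProdEquivProd)
  rw [mem_rootsOfUnity, mem_rootsOfUnity, mem_rootsOfUnity, ← Prod.mk_eq_one]
  exact (EmbeddingLike.map_eq_one_iff (f := MulEquiv.prodUnits)).symm

theorem card_rootsOfUnity_zmod_mul_of_coprime {m n : ℕ} (h : m.Coprime n) (k : ℕ) :
    Nat.card (rootsOfUnity k (ZMod (m * n))) =
      Nat.card (rootsOfUnity k (ZMod m)) * Nat.card (rootsOfUnity k (ZMod n)) := by
  rw [← card_rootsOfUnity_prod]
  exact Nat.card_congr ((ZMod.chineseRemainder h).toMulEquiv.restrictRootsOfUnity k).toEquiv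

end RootsOfUnity

section TwoPow

theorem two_pow_dvd_sq_sub_one_iff {k : ℕ} {a : ℤ} :
    2 ^ (k + 3) ∣ a ^ 2 - 1 ↔ 2 ^ (k + 2) ∣ a - 1 ∨ 2 ^ (k + 2) ∣ a + 1 := by
  constructor
  · intro h
    have hodd : Odd a := by
      have : Even (a ^ 2 - 1) := even_iff_two_dvd.mpr ((dvd_pow_self 2 (by omega)).trans h)
      rwa [Int.even_sub_one, Int.not_even_iff_odd, Int.odd_pow' two_ne_zero] at this
    obtain ⟨b, rfl⟩ := hodd
    have hb : 2 ^ (k + 1) ∣ b * (b + 1) := by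
      rw [show (2 * b + 1) ^ 2 - 1 = 2 ^ 2 * (b * (b + 1)) by ring, pow_add 2 (k + 1) 2,
        mul_comm (2 ^ (k + 1))] at h
      exact Int.dvd_of_mul_dvd_mul_left (by norm_num) h
    rw [show 2 * b + 1 - 1 = 2 * b by ring, show 2 * b + 1 + 1 = 2 * (b + 1) by ring, pow_succ']
    by_cases hb2 : 2 ∣ b
    · exact .inl (mul_dvd_mul_left 2 (Int.prime_two.pow_dvd_of_dvd_mul_right _ (by omega) hb))
    · exact .inr (mul_dvd_mul_left 2 (Int.prime_two.pow_dvd_of_dvd_mul_left _ hb2 hb))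
  · rw [show a ^ 2 - 1 = (a - 1) * (a + 1) by ring]
    rintro (h | h)
    · have : 2 ∣ a + 1 := by have := (dvd_pow_self (2 : ℤ) (by omega)).trans h; omega
      exact pow_succ (2 : ℤ) (k + 2) ▸ mul_dvd_mul h this
    · have : 2 ∣ a - 1 := by have := (dvd_pow_self (2 : ℤ) (by omega)).trans h; omega
      exact pow_succ' (2 : ℤ) (k + 2) ▸ mul_dvd_mul this h

theorem mem_zpowers_neg_one {G : Type*} [Group G] [HasDistribNeg G] {x : G} :
    x ∈ Subgroup.zpowers (-1 : G) ↔ x = 1 ∨ x = -1 := by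
  constructor
  · rintro ⟨n, rfl⟩
    rcases Int.even_or_odd n with hn | hn <;> simp [hn.neg_zpow]
  · rintro (rfl | rfl)
    exacts [one_mem _, Subgroup.mem_zpowers _]

theorem rootsOfUnity_two_zmod_two_pow (k : ℕ) :
    rootsOfUnity 2 (ZMod (2 ^ (k + 3))) =
      (Subgroup.zpowers (-1)).comap
        (ZMod.unitsMap (pow_dvd_pow 2 (Nat.le_succ (k + 2)))) := by
  ext u
  obtain ⟨a, ha⟩ := ZMod.intCast_surjective (u : ZMod (2 ^ (k + 3)))
  have cast_eq_iff (m : ℕ) (b c : ℤ) : (b : ZMod (2 ^ m)) = c ↔ 2 ^ m ∣ b - c := by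
    rw [eq_comm, ZMod.intCast_eq_intCast_iff_dvd_sub, Nat.cast_pow, Nat.cast_ofNat]
  have h_sq : u ∈ rootsOfUnity 2 (ZMod (2 ^ (k + 3))) ↔ 2 ^ (k + 3) ∣ a ^ 2 - 1 := by
    rw [mem_rootsOfUnity', ← ha, ← cast_eq_iff, Int.cast_pow, Int.cast_one]
  have h_one : (a : ZMod (2 ^ (k + 2))) = 1 ↔ 2 ^ (k + 2) ∣ a - 1 := by
    rw [← cast_eq_iff, Int.cast_one]
  have h_neg_one : (a : ZMod (2 ^ (k + 2))) = -1 ↔ 2 ^ (k + 2) ∣ a + 1 := by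
    rw [← sub_neg_eq_add, ← cast_eq_iff, Int.cast_neg, Int.cast_one]
  rw [h_sq, two_pow_dvd_sq_sub_one_iff, ← h_one, ← h_neg_one, Subgroup.mem_comap,
    mem_zpowers_neg_one, Units.ext_iff, Units.ext_iff, ZMod.unitsMap_val, ← ha,
    ZMod.cast_intCast (pow_dvd_pow 2 (Nat.le_succ (k + 2))), Units.val_one, Units.val_neg,
    Units.val_one]

theorem card_units_zmod_two_pow (k : ℕ) : Nat.card (ZMod (2 ^ (k + 1)))ˣ = 2 ^ k := by
  rw [Nat.card_eq_fintype_card, ZMod.card_units_eq_totient,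
    Nat.totient_prime_pow_succ Nat.prime_two, Nat.add_one_sub_one, mul_one]

theorem card_zpowers_neg_one_zmod {n : ℕ} (hn : 2 < n) :
    Nat.card (Subgroup.zpowers (-1 : (ZMod n)ˣ)) = 2 := by
  have : Fact (1 < n) := ⟨by omega⟩
  rw [Nat.card_zpowers, ← orderOf_units, Units.coe_neg_one, orderOf_neg_one, ringChar.eq (ZMod n) n,
    if_neg hn.ne']

theorem card_rootsOfUnity_two_zmod_two_pow (k : ℕ) :
    Nat.card (rootsOfUnity 2 (ZMod (2 ^ (k + 3)))) = 4 := by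
  let P : Subgroup (ZMod (2 ^ (k + 2)))ˣ := Subgroup.zpowers (-1)
  have index_eq : (rootsOfUnity 2 (ZMod (2 ^ (k + 3)))).index = P.index := by
    rw [rootsOfUnity_two_zmod_two_pow,
      Subgroup.index_comap_of_surjective _ (ZMod.unitsMap_surjective _)]
  have card_P : Nat.card P = 2 := card_zpowers_neg_one_zmod (by
    have := Nat.two_pow_pos k
    rw [pow_add]
    omega)
  have hR := (rootsOfUnity 2 (ZMod (2 ^ (k + 3)))).card_mul_index
  have hP := P.card_mul_index
  rw [index_eq, card_units_zmod_two_pow] at hR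
  rw [card_P, card_units_zmod_two_pow] at hP
  refine Nat.eq_of_mul_eq_mul_right (Nat.pos_of_ne_zero P.index_ne_zero_of_finite) ?_
  calc
    _ = 2 * 2 ^ (k + 1) := hR.trans (pow_succ' 2 (k + 1))
    _ = 4 * P.index := by rw [← hP]; ring

end TwoPow

section A₂

theorem a₂_eq_card_rootsOfUnity (n : ℕ) : a₂ n = Nat.card (rootsOfUnity 2 (ZMod n)) :=
  card_mulChar_pow_eq_one (ZMod n) ℂ 2

theorem a₂_eq_gcd_totient {n : ℕ} [NeZero n] (h : IsCyclic (ZMod n)ˣ) :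
    a₂ n = n.totient.gcd 2 := by
  rw [a₂_eq_card_rootsOfUnity, card_rootsOfUnity_of_isCyclic, Nat.card_eq_fintype_card,
    ZMod.card_units_eq_totient]

theorem a₂_one : a₂ 1 = 1 :=
  a₂_eq_gcd_totient ZMod.isCyclic_units_one

theorem a₂_two : a₂ 2 = 1 :=
  a₂_eq_gcd_totient ZMod.isCyclic_units_two

theorem a₂_four : a₂ 4 = 2 :=
  a₂_eq_gcd_totient ZMod.isCyclic_units_four

theorem a₂_two_pow_add_three (k : ℕ) : a₂ (2 ^ (k + 3)) = 4 := by
  rw [a₂_eq_card_rootsOfUnity, card_rootsOfUnity_two_zmod_two_pow]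

theorem a₂_odd_prime_pow {p : ℕ} (hp : p.Prime) (hp2 : p ≠ 2) (k : ℕ) : a₂ (p ^ (k + 1)) = 2 := by
  have : NeZero (p ^ (k + 1)) := ⟨pow_ne_zero _ hp.ne_zero⟩
  rw [a₂_eq_gcd_totient (ZMod.isCyclic_units_of_prime_pow p hp hp2 _)]
  have two_lt : 2 < p ^ (k + 1) :=
    (hp.two_le.lt_of_ne' hp2).trans_le (Nat.le_self_pow (by omega) p)
  exact Nat.gcd_eq_right (Nat.totient_even two_lt).two_dvd

theorem a₂_mul_of_coprime {m n : ℕ} (h : m.Coprime n) : a₂ (m * n) = a₂ m * a₂ n := by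
  simp only [a₂_eq_card_rootsOfUnity, card_rootsOfUnity_zmod_mul_of_coprime h]

theorem a₂_prime_pow_le {p : ℕ} (hp : p.Prime) (k : ℕ) : a₂ (p ^ k) ≤ k + 1 := by
  rcases eq_or_ne p 2 with rfl | hp2
  · match k with
    | 0 => simp [a₂_one]
    | 1 => simp [a₂_two]
    | 2 => simp [a₂_four]
    | k + 3 => rw [a₂_two_pow_add_three]; omega
  · match k with
    | 0 => simp [a₂_one]
    | k + 1 => rw [a₂_odd_prime_pow hp hp2]; omega

theorem a₂_le_sigma_zero {n : ℕ} (hn : n ≠ 0) : a₂ n ≤ ArithmeticFunction.sigma 0 n := by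
  induction n using Nat.recOnPosPrimePosCoprime with
  | zero => contradiction
  | one => simp [a₂_one]
  | prime_pow p k hp _ =>
    rw [ArithmeticFunction.sigma_zero_apply_prime_pow hp]
    exact a₂_prime_pow_le hp k
  | coprime a b ha hb hab iha ihb =>
    rw [a₂_mul_of_coprime hab, ArithmeticFunction.isMultiplicative_sigma.map_mul_of_coprime hab]
    exact Nat.mul_le_mul (iha (by omega)) (ihb (by omega))

end A₂

section LSeries

theorem LSeriesSummable_sigma_zero {s : ℂ} (hs : 1 < s.re) :
    LSeriesSummable (fun n => (ArithmeticFunction.sigma 0 n : ℂ)) s := by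
  have hζ := ArithmeticFunction.LSeriesSummable_zeta_iff.mpr hs
  have := ArithmeticFunction.LSeriesSummable_mul
    (f := (ArithmeticFunction.zeta : ArithmeticFunction ℂ))
    (g := (ArithmeticFunction.zeta : ArithmeticFunction ℂ))
    (by simpa using hζ) (by simpa using hζ)
  convert this using 2 with n
  rw [← ArithmeticFunction.zeta_mul_pow_eq_sigma, ArithmeticFunction.pow_zero_eq_zeta,
    ← ArithmeticFunction.natCoe_apply, ArithmeticFunction.natCoe_mul]

theorem LSeriesSummable_a₂ {s : ℂ} (hs : 1 < s.re) : LSeriesSummable (fun n => (a₂ n : ℂ)) s := by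
  refine Summable.of_norm_bounded (LSeriesSummable_sigma_zero hs).norm fun n => ?_
  rcases eq_or_ne n 0 with rfl | hn
  · simp
  · exact LSeries.norm_term_le s (by simpa using a₂_le_sigma_zero hn)

theorem LSeries_term_pow (f : ℕ → ℂ) (s : ℂ) {n : ℕ} (hn : n ≠ 0) (k : ℕ) :
    LSeries.term f s (n ^ k) = f (n ^ k) * ((n : ℂ) ^ (-s)) ^ k := by
  rw [LSeries.term_of_ne_zero (pow_ne_zero k hn), div_eq_mul_inv, ← Complex.cpow_neg,
    Nat.cast_pow, ← Complex.natCast_cpow_natCast_mul, Complex.cpow_nat_mul]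

theorem LSeries_term_mul {f : ℕ → ℂ} {m n : ℕ} (h : f (m * n) = f m * f n) (s : ℂ) :
    LSeries.term f s (m * n) = LSeries.term f s m * LSeries.term f s n := by
  rcases eq_or_ne m 0 with rfl | hm
  · simp
  rcases eq_or_ne n 0 with rfl | hn
  · simp
  rw [LSeries.term_of_ne_zero (mul_ne_zero hm hn), LSeries.term_of_ne_zero hm,
    LSeries.term_of_ne_zero hn, h, Nat.cast_mul, Complex.natCast_mul_natCast_cpow,
    mul_div_mul_comm]

theorem LSeries_hasProd_of_multiplicative {f : ℕ → ℂ} {s : ℂ} (hf₁ : f 1 = 1)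
    (hmul : ∀ {m n : ℕ}, m.Coprime n → f (m * n) = f m * f n) (hsum : LSeriesSummable f s) :
    HasProd (fun p : Nat.Primes => ∑' k, f (p ^ k) * ((p : ℂ) ^ (-s)) ^ k) (LSeries f s) := by
  have h := EulerProduct.eulerProduct_hasProd (f := LSeries.term f s) (by simp [hf₁])
    (fun hmn => LSeries_term_mul (hmul hmn) s) hsum.norm (LSeries.term_zero f s)
  simp only [fun p : Nat.Primes => LSeries_term_pow f s p.2.ne_zero] at h
  exact h

theorem riemannZeta_sq_div_hasProd {s : ℂ} (hs : 1 < s.re) :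
    HasProd (fun p : Nat.Primes => (1 - (p : ℂ) ^ (-s))⁻¹ ^ 2 * (1 - ((p : ℂ) ^ (-s)) ^ 2))
      (riemannZeta s ^ 2 * (riemannZeta (2 * s))⁻¹) := by
  have hs2 : 1 < (2 * s).re := by
    rw [show (2 * s).re = 2 * s.re by simp]
    linarith
  have hinv := (riemannZeta_eulerProduct_hasProd hs2).inv₀ (riemannZeta_ne_zero_of_one_lt_re hs2)
  convert ((riemannZeta_eulerProduct_hasProd hs).pow 2).mul hinv using 4 with p
  rw [inv_inv, ← Complex.cpow_nat_mul, Nat.cast_ofNat, mul_neg]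

end LSeries

section EulerFactor

theorem hasSum_mul_pow_of_eventually_const {K : Type*} [NormedField K] {f : ℕ → K} {c x : K}
    {m : ℕ} (hf : ∀ k, f (k + m) = c) (hx : ‖x‖ < 1) :
    HasSum (fun k => f k * x ^ k) (c * x ^ m * (1 - x)⁻¹ + ∑ k ∈ range m, f k * x ^ k) := by
  rw [← hasSum_nat_add_iff]
  refine ((hasSum_geometric_of_norm_lt_one hx).mul_left (c * x ^ m)).congr_fun fun k => ?_
  rw [hf]
  ring

variable {x : ℂ}

theorem tsum_a₂_odd_prime_pow {p : ℕ} (hp : p.Prime) (hp2 : p ≠ 2) (hx : ‖x‖ < 1) :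
    ∑' k, (a₂ (p ^ k) : ℂ) * x ^ k = (1 - x)⁻¹ ^ 2 * (1 - x ^ 2) := by
  have h := hasSum_mul_pow_of_eventually_const (f := fun k => (a₂ (p ^ k) : ℂ)) (m := 1) (c := 2)
    (fun k => by rw [a₂_odd_prime_pow hp hp2, Nat.cast_ofNat]) hx
  have hne : 1 - x ≠ 0 := (isUnit_one_sub_of_norm_lt_one hx).ne_zero
  rw [h.tsum_eq, sum_range_one, pow_zero, a₂_one]
  field_simp
  ring

theorem tsum_a₂_two_pow (hx : ‖x‖ < 1) :
    ∑' k, (a₂ (2 ^ k) : ℂ) * x ^ k = (1 + x ^ 2 + 2 * x ^ 3) * (1 - x)⁻¹ := by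
  have h := hasSum_mul_pow_of_eventually_const (f := fun k => (a₂ (2 ^ k) : ℂ)) (m := 3) (c := 4)
    (fun k => by rw [a₂_two_pow_add_three, Nat.cast_ofNat]) hx
  have hne : 1 - x ≠ 0 := (isUnit_one_sub_of_norm_lt_one hx).ne_zero
  rw [h.tsum_eq]
  simp only [sum_range_succ, sum_range_zero, pow_zero, pow_one, a₂_one, a₂_two,
    show 2 ^ 2 = 4 from rfl, a₂_four]
  field_simp
  push_cast
  ring

/-- The quotient of the Euler factors at `p` of `∑ a₂(n) n ^ (-s)` and of `ζ(s) ^ 2 / ζ(2s)`, as a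
function of `x = p ^ (-s)`. -/
noncomputable def eulerFactorRatio (p : ℕ) (x : ℂ) : ℂ :=
  if p = 2 then (1 + x ^ 2 + 2 * x ^ 3) * (1 - x) * (1 - x ^ 2)⁻¹ else 1

theorem tsum_a₂_prime_pow {p : ℕ} (hp : p.Prime) (hx : ‖x‖ < 1) :
    ∑' k, (a₂ (p ^ k) : ℂ) * x ^ k =
      eulerFactorRatio p x * ((1 - x)⁻¹ ^ 2 * (1 - x ^ 2)) := by
  rcases eq_or_ne p 2 with rfl | hp2
  · have hx_sq : ‖x ^ 2‖ < 1 := norm_pow x 2 ▸ pow_lt_one₀ (norm_nonneg x) hx two_ne_zero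
    have hne : 1 - x ≠ 0 := (isUnit_one_sub_of_norm_lt_one hx).ne_zero
    have hne_sq : 1 - x ^ 2 ≠ 0 := (isUnit_one_sub_of_norm_lt_one hx_sq).ne_zero
    rw [tsum_a₂_two_pow hx, eulerFactorRatio, if_pos rfl]
    field_simp
  · rw [tsum_a₂_odd_prime_pow hp hp2 hx, eulerFactorRatio, if_neg hp2, one_mul]

theorem eulerFactorRatio_hasProd (s : ℂ) :
    HasProd (fun p : Nat.Primes => eulerFactorRatio p ((p : ℂ) ^ (-s)))
      (eulerFactorRatio 2 (2 ^ (-s))) :=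
  hasProd_single (⟨2, Nat.prime_two⟩ : Nat.Primes) fun _ hp => if_neg fun h => hp (Subtype.ext h)

end EulerFactor

theorem a₂_LSeries_eq (s : ℂ) (hs : 1 < s.re) :
    LSeries (fun n => (a₂ n : ℂ)) s =
      (1 + (2 : ℂ) ^ (-(2 * s)) + 2 * (2 : ℂ) ^ (-(3 * s))) * (1 - (2 : ℂ) ^ (-s)) *
        riemannZeta s ^ 2 * (1 - (2 : ℂ) ^ (-(2 * s)))⁻¹ * (riemannZeta (2 * s))⁻¹ := by
  have euler_a₂ := LSeries_hasProd_of_multiplicative (by simp [a₂_one])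
    (fun h => by rw [a₂_mul_of_coprime h, Nat.cast_mul]) (LSeriesSummable_a₂ hs)
  have euler_zeta := (eulerFactorRatio_hasProd s).mul (riemannZeta_sq_div_hasProd hs)
  have factor_eq (p : Nat.Primes) := tsum_a₂_prime_pow p.2
    ((Complex.norm_prime_cpow_le_one_half p hs).trans_lt one_half_lt_one)
  have cpow_two_mul : (2 : ℂ) ^ (-(2 * s)) = ((2 : ℂ) ^ (-s)) ^ 2 := by
    rw [← Complex.cpow_ofNat_mul, mul_neg]
  have cpow_three_mul : (2 : ℂ) ^ (-(3 * s)) = ((2 : ℂ) ^ (-s)) ^ 3 := by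
    rw [← Complex.cpow_ofNat_mul, mul_neg]
  rw [euler_a₂.unique (euler_zeta.congr_fun factor_eq), eulerFactorRatio, if_pos rfl,
    cpow_two_mul, cpow_three_mul]
  ring
end

section
/- As real s → 1 from the right, (s - 1) · ∏_{p prime, p ≡ 1 (mod 3)} (1 - p^{-s})^{-2} converges to (√3/(2π)) · ∏_{p prime, p ≡ 1 (mod 3)} (1 - p^{-2})^{-1}. -/
/-!
Let `χ` be a quadratic character modulo `N`, `χ₀` the trivial one, and `P(s)` the Euler product of
`ζ(s)` over the primes with `χ p = 1`. Comparing local factors gives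
`P(s)² L(2s, χ₀) = L(s, χ₀) L(s, χ) P(2s)`, so the behaviour of `(s - 1) P(s)²` as `s → 1` follows
from the residue of `L(s, χ₀)`. For odd `χ` the value `L(1, χ)` comes from the partial fraction
expansion of the cotangent: pairing `j` with `N - j` turns the conditionally convergent series into
the absolutely convergent sums `∑ (1 / (n + a) - 1 / (n + 1 - a)) = π cot (π a)`, `a = j / N`.
-/

open Filter Topology Complex
open scoped Real

lemma hasProd_primes_mulIndicator_iff {M : Type*} [CommMonoid M] [TopologicalSpace M]
    {S : Set ℕ} {f : ℕ → M} {a : M} :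
    HasProd (fun p : Nat.Primes ↦ S.mulIndicator f p) a ↔
      HasProd (fun p : {p : ℕ // p.Prime ∧ p ∈ S} ↦ f p) a := by
  have hprimes := hasProd_subtype_iff_mulIndicator (s := {p | p.Prime}) (f := S.mulIndicator f)
    (a := a)
  rw [Set.mulIndicator_mulIndicator, ← hasProd_subtype_iff_mulIndicator] at hprimes
  exact hprimes

lemma norm_inv_one_sub_sub_one_le {K : Type*} [NormedField K] {x : K} (hx : ‖x‖ ≤ 1 / 2) :
    ‖(1 - x)⁻¹ - 1‖ ≤ 2 * ‖x‖ := by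
  have hlower : 1 / 2 ≤ ‖1 - x‖ := by
    have htri := norm_sub_norm_le 1 x
    rw [norm_one] at htri
    linarith
  have hne : 1 - x ≠ 0 := norm_pos_iff.mp (by linarith)
  have heq : (1 - x)⁻¹ - 1 = x / (1 - x) := by field_simp; ring
  rw [heq, norm_div, div_le_iff₀ (by linarith)]
  nlinarith [norm_nonneg x]

lemma ofReal_tprod {ι : Type*} (f : ι → ℝ) :
    ((∏' i, f i : ℝ) : ℂ) = ∏' i, (f i : ℂ) :=
  isometry_ofReal.isClosedEmbedding.map_tprod f (g := ofRealHom)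

lemma tendsto_ofReal_nhdsGT (a : ℝ) : Tendsto ofReal (𝓝[>] a) (𝓝[{s : ℂ | a < s.re}] a) :=
  continuous_ofReal.continuousWithinAt.tendsto_nhdsWithin fun _ hs ↦ hs

lemma one_lt_re_two_mul {s : ℂ} (hs : 1 < s.re) : 1 < (2 * s).re := by
  rw [mul_re, re_ofNat, im_ofNat]
  linarith

section PartialEulerProduct

/-- The Euler product of `ζ(s)` restricted to the primes in `S`, meaningful for `1 < re s`. -/
noncomputable def partialEulerProduct (S : Set ℕ) (s : ℂ) : ℂ :=
  ∏' p : {p : ℕ // p.Prime ∧ p ∈ S}, (1 - (p : ℂ) ^ (-s))⁻¹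

variable (S : Set ℕ) {s : ℂ} {σ : ℝ}

lemma norm_eulerFactor_sub_one_le {p : ℕ} (hp : p.Prime) (hσ : 1 < σ) (hs : σ ≤ s.re) :
    ‖(1 - (p : ℂ) ^ (-s))⁻¹ - 1‖ ≤ 2 * (p : ℝ) ^ (-σ) := by
  have hhalf := norm_prime_cpow_le_one_half ⟨p, hp⟩ (hσ.trans_le hs)
  grw [norm_inv_one_sub_sub_one_le hhalf, norm_natCast_cpow_of_pos hp.pos, neg_re,
    Real.rpow_le_rpow_of_exponent_le (mod_cast hp.one_le) (neg_le_neg hs)]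

lemma summable_primes_mem_rpow_neg (hσ : 1 < σ) :
    Summable fun p : {p : ℕ // p.Prime ∧ p ∈ S} ↦ (p : ℝ) ^ (-σ) :=
  (Real.summable_nat_rpow.mpr (neg_lt_neg hσ)).comp_injective Subtype.val_injective

theorem hasProd_partialEulerProduct (hs : 1 < s.re) :
    HasProd (fun p : {p : ℕ // p.Prime ∧ p ∈ S} ↦ (1 - (p : ℂ) ^ (-s))⁻¹)
      (partialEulerProduct S s) := by
  have hsum := ((summable_primes_mem_rpow_neg S hs).mul_left 2).of_nonneg_of_le
    (fun _ ↦ norm_nonneg _) fun p ↦ norm_eulerFactor_sub_one_le p.2.1 hs le_rfl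
  have hmul := multipliable_one_add_of_summable hsum
  simp only [add_sub_cancel] at hmul
  exact hmul.hasProd

theorem continuousAt_partialEulerProduct (hs : 1 < s.re) :
    ContinuousAt (partialEulerProduct S) s := by
  obtain ⟨σ, hσ, hσs⟩ := exists_between hs
  have hlim : Tendsto
      (fun z ↦ ∏' p : {p : ℕ // p.Prime ∧ p ∈ S}, (1 + ((1 - (p : ℂ) ^ (-z))⁻¹ - 1))) (𝓝 s)
      (𝓝 (∏' p : {p : ℕ // p.Prime ∧ p ∈ S}, (1 + ((1 - (p : ℂ) ^ (-s))⁻¹ - 1)))) := by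
    refine tendsto_tprod_one_add_of_dominated_convergence
      ((summable_primes_mem_rpow_neg S hσ).mul_left 2) (fun p ↦ ?_) ?_
    · have : NeZero (p : ℕ) := ⟨p.2.1.ne_zero⟩
      have hcpow : ContinuousAt (fun z ↦ (p : ℂ) ^ (-z)) s := by fun_prop
      exact ((continuousAt_const.sub hcpow).inv₀ (one_sub_prime_cpow_ne_zero p.2.1 hs)).sub_const 1
    · filter_upwards [continuous_re.continuousAt.eventually_const_le hσs] with z hz p
      exact norm_eulerFactor_sub_one_le p.2.1 hσ hz
  simp only [add_sub_cancel] at hlim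
  exact hlim

lemma partialEulerProduct_ofReal_sq (hσ : 1 < σ) :
    partialEulerProduct S σ ^ 2 =
      (∏' p : {p : ℕ // p.Prime ∧ p ∈ S}, (1 - (p : ℝ) ^ (-σ))⁻¹ ^ 2 : ℝ) := by
  rw [ofReal_tprod, ← ((hasProd_partialEulerProduct S (s := σ) hσ).pow 2).tprod_eq]
  refine tprod_congr fun p ↦ ?_
  push_cast [ofReal_cpow (Nat.cast_nonneg (p : ℕ))]
  rfl

lemma partialEulerProduct_two :
    partialEulerProduct S 2 = (∏' p : {p : ℕ // p.Prime ∧ p ∈ S}, (1 - ((p : ℝ) ^ 2)⁻¹)⁻¹ : ℝ) := by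
  rw [ofReal_tprod]
  refine tprod_congr fun p ↦ ?_
  push_cast
  rw [cpow_neg, cpow_ofNat]

end PartialEulerProduct

section QuadraticCharacter

open DirichletCharacter

variable {N : ℕ} {χ : DirichletCharacter ℂ N} {s : ℂ}

theorem partialEulerProduct_sq_mul_LSeries (hχ : χ.IsQuadratic) (hs : 1 < s.re) :
    partialEulerProduct {n | χ n = 1} s ^ 2 *
        LSeries (fun n ↦ (1 : DirichletCharacter ℂ N) n) (2 * s) =
      LSeries (fun n ↦ (1 : DirichletCharacter ℂ N) n) s * LSeries (fun n ↦ χ n) s *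
        partialEulerProduct {n | χ n = 1} (2 * s) := by
  have h2s : 1 < (2 * s).re := one_lt_re_two_mul hs
  have hsplit {z : ℂ} (hz : 1 < z.re) :=
    (hasProd_primes_mulIndicator_iff (f := fun n ↦ (1 - (n : ℂ) ^ (-z))⁻¹)).mpr
      (hasProd_partialEulerProduct {n : ℕ | χ n = 1} hz)
  have htriv {z : ℂ} (hz : 1 < z.re) :=
    LSeries_eulerProduct_hasProd (1 : DirichletCharacter ℂ N) hz
  have hlhs := ((hsplit hs).pow 2).mul (htriv h2s)
  have hrhs := ((htriv hs).mul (LSeries_eulerProduct_hasProd χ hs)).mul (hsplit h2s)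
  refine hlhs.unique (hrhs.congr_fun fun p ↦ ?_)
  have hdouble : (p : ℂ) ^ (-(2 * s)) = ((p : ℂ) ^ (-s)) ^ 2 := by
    rw [← cpow_nat_mul, Nat.cast_ofNat, mul_neg]
  have htriv_apply : (1 : DirichletCharacter ℂ N) p = χ p ^ 2 := by
    rw [← hχ.sq_eq_one, MulChar.pow_apply' χ two_ne_zero]
  simp only [Set.mulIndicator, Set.mem_ofPred_eq, htriv_apply, hdouble]
  rcases hχ p with h | h | h
  · simp [h]
  · simp only [h, if_true]
    ring
  · have hne : (-1 : ℂ) ≠ 1 := by norm_num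
    simp only [h, hne, if_false]
    rw [one_pow, one_mul, neg_one_sq, mul_one, ← mul_inv]
    ring

theorem tendsto_sub_one_mul_partialEulerProduct_sq [NeZero N] (hχ : χ.IsQuadratic) (hχ1 : χ ≠ 1) :
    Tendsto (fun s ↦ (s - 1) * partialEulerProduct {n | χ n = 1} s ^ 2) (𝓝[{s | 1 < s.re}] 1)
      (𝓝 ((∏ p ∈ N.primeFactors, (1 - (p : ℂ)⁻¹)) * LFunction χ 1 / LFunctionTrivChar N 2 *
        partialEulerProduct {n | χ n = 1} 2)) := by
  have hre : 1 < (2 : ℂ).re := by simp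
  have hle : 𝓝[{s : ℂ | 1 < s.re}] 1 ≤ 𝓝[≠] 1 :=
    nhdsWithin_mono 1 fun s (hs : 1 < s.re) (h : s = 1) ↦ by simp [h] at hs
  have hdouble : Tendsto (fun s : ℂ ↦ 2 * s) (𝓝[{s | 1 < s.re}] 1) (𝓝 2) :=
    ((continuous_const_mul (2 : ℂ)).tendsto' 1 2 (mul_one 2)).mono_left nhdsWithin_le_nhds
  have htriv := (LFunctionTrivChar_residue_one (N := N)).mono_left hle
  have hL : Tendsto (LFunction χ) (𝓝[{s | 1 < s.re}] 1) (𝓝 (LFunction χ 1)) :=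
    (differentiable_LFunction hχ1).continuous.continuousAt.mono_left nhdsWithin_le_nhds
  have htriv_double := (differentiableAt_LFunction (1 : DirichletCharacter ℂ N) 2
    (.inl (by norm_num))).continuousAt.tendsto.comp hdouble
  have hne := LFunction_ne_zero_of_one_le_re (1 : DirichletCharacter ℂ N) (s := 2)
    (.inr (by norm_num)) hre.le
  have hP := (continuousAt_partialEulerProduct {n | χ n = 1} hre).tendsto.comp hdouble
  refine (((htriv.mul hL).div htriv_double hne).mul hP).congr' ?_
  filter_upwards [self_mem_nhdsWithin] with s (hs : 1 < s.re)
  have h2s : 1 < (2 * s).re := one_lt_re_two_mul hs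
  have hne_double := LFunction_ne_zero_of_one_le_re (1 : DirichletCharacter ℂ N) (s := 2 * s)
    (.inr fun h ↦ by simp [h] at h2s) h2s.le
  have hid := partialEulerProduct_sq_mul_LSeries hχ hs
  rw [← LFunction_eq_LSeries _ hs, ← LFunction_eq_LSeries _ hs, ← LFunction_eq_LSeries _ h2s] at hid
  simp only [Pi.div_apply, Function.comp_apply, LFunctionTrivChar]
  rw [div_mul_eq_mul_div, div_eq_iff hne_double]
  linear_combination -(s - 1) * hid

end QuadraticCharacter

section CotangentValue

open HurwitzZeta

lemma norm_ofReal_cpow_sub_le {m x y : ℝ} {r : ℂ} (hr : r.re ≤ 1) (hm : 0 < m) (hx : m ≤ x)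
    (hy : m ≤ y) : ‖(y : ℂ) ^ r - (x : ℂ) ^ r‖ ≤ ‖r‖ * m ^ (r.re - 1) * ‖y - x‖ := by
  rcases eq_or_ne r 0 with rfl | hr0
  · simp
  refine Convex.norm_image_sub_le_of_norm_hasDerivWithin_le (s := Set.Ici m)
    (f := fun t : ℝ ↦ (t : ℂ) ^ r) (f' := fun t : ℝ ↦ r * (t : ℂ) ^ (r - 1))
    (fun t ht ↦ ?_) (fun t ht ↦ ?_) (convex_Ici m) hx hy
  · exact (hasDerivAt_ofReal_cpow_const (hm.trans_le ht).ne' hr0).hasDerivWithinAt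
  · rw [norm_mul, norm_cpow_eq_rpow_re_of_pos (hm.trans_le ht), sub_re, one_re]
    have hpow := Real.rpow_le_rpow_of_nonpos hm ht (show r.re - 1 ≤ 0 by linarith)
    exact mul_le_mul_of_nonneg_left hpow (norm_nonneg r)

lemma norm_one_div_cpow_sub_one_div_cpow_le {a c : ℝ} {s : ℂ} (hc : 0 < c) (hca : c ≤ a)
    (hca' : c ≤ 1 - a) (hs : 1 ≤ s.re) (hs' : s.re ≤ 2) (n : ℕ) :
    ‖1 / (n + a : ℂ) ^ s - 1 / (n + 1 - a : ℂ) ^ s‖ ≤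
      ‖s‖ * c ^ (-3 : ℝ) * (n + 1 : ℝ) ^ (-2 : ℝ) := by
  have hn : (0 : ℝ) ≤ n := n.cast_nonneg
  have hmean := norm_ofReal_cpow_sub_le (m := c * (n + 1)) (x := n + 1 - a) (y := n + a) (r := -s)
    (by rw [neg_re]; linarith) (by positivity) (by nlinarith [hn]) (by nlinarith [hn])
  have hdist : ‖(n + a : ℝ) - (n + 1 - a)‖ ≤ 1 := by
    rw [Real.norm_eq_abs, abs_le]
    constructor <;> linarith
  have hpow : (c * (n + 1)) ^ ((-s).re - 1) ≤ c ^ (-3 : ℝ) * (n + 1 : ℝ) ^ (-2 : ℝ) := by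
    rw [Real.mul_rpow hc.le (by positivity), neg_re]
    exact mul_le_mul (Real.rpow_le_rpow_of_exponent_ge hc (by linarith) (by linarith))
      (Real.rpow_le_rpow_of_exponent_le (by linarith) (by linarith)) (by positivity) (by positivity)
  push_cast [cpow_neg, ← one_div, norm_neg] at hmean
  grw [hmean, hdist, hpow, mul_one, mul_assoc]

lemma tendsto_sum_one_div_add_sub_one_div_sub {x : ℂ} (hx : x ∈ integerComplement) :
    Tendsto (fun M : ℕ ↦ ∑ n ∈ Finset.range M, (1 / (n + x) - 1 / (n + 1 - x))) atTop
      (𝓝 (π * cot (π * x))) := by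
  -- The partial sums differ from those of the cotangent series by the boundary term `1 / (M + x)`.
  have htail : Tendsto (fun M : ℕ ↦ 1 / ((M : ℂ) + x)) atTop (𝓝 0) := by
    simp only [one_div]
    exact tendsto_inv₀_cobounded.comp
      ((tendsto_add_const_cobounded x).comp tendsto_natCast_atTop_cobounded)
  have hcot := ((tendsto_logDeriv_euler_cot_sub hx).const_add (1 / x)).sub htail
  rw [add_sub_cancel, sub_zero] at hcot
  refine hcot.congr fun M ↦ ?_
  induction M with
  | zero => simp
  | succ M ih =>
    have hflip : 1 / (x - (M + 1)) = -(1 / (M + 1 - x)) := by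
      rw [← one_div_neg_eq_neg_one_div, neg_sub]
    rw [Finset.sum_range_succ, Finset.sum_range_succ, ← ih, cotTerm, hflip]
    push_cast
    ring

lemma ofReal_mem_integerComplement_of_mem_Ioo {a : ℝ} (ha : a ∈ Set.Ioo 0 1) :
    (a : ℂ) ∈ integerComplement := by
  rintro ⟨n, hn⟩
  have hna : (n : ℝ) = a := mod_cast hn
  have hpos : 0 < n := Int.cast_pos.mp (hna ▸ ha.1)
  have hlt : n < 1 := by exact_mod_cast hna ▸ ha.2
  lia

lemma continuous_one_div_cpow_ofReal {z : ℂ} (hz : z ≠ 0) :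
    Continuous fun s : ℝ ↦ 1 / z ^ (s : ℂ) := by
  have : NeZero z := ⟨hz⟩
  refine continuous_const.div (by fun_prop) fun s ↦ ?_
  simp [cpow_eq_zero_iff, hz]

lemma tendsto_tsum_one_div_cpow_sub_one_div_cpow {a : ℝ} (ha : a ∈ Set.Ioo 0 1) :
    Tendsto (fun s : ℝ ↦ ∑' n : ℕ, (1 / (n + a : ℂ) ^ (s : ℂ) - 1 / (n + 1 - a : ℂ) ^ (s : ℂ)))
      (𝓝[>] 1) (𝓝 (π * cot (π * a))) := by
  set term : ℝ → ℕ → ℂ := fun s n ↦ 1 / (n + a : ℂ) ^ (s : ℂ) - 1 / (n + 1 - a : ℂ) ^ (s : ℂ)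
    with hterm
  let c := min a (1 - a)
  have hc : 0 < c := lt_min ha.1 (sub_pos.mpr ha.2)
  let bound (n : ℕ) : ℝ := 2 * c ^ (-3 : ℝ) * (n + 1 : ℝ) ^ (-2 : ℝ)
  have hsummable : Summable bound := by
    have hsq := (summable_nat_add_iff 1).mpr
      (Real.summable_nat_rpow.mpr (show (-2 : ℝ) < -1 by norm_num))
    simp only [Nat.cast_add, Nat.cast_one] at hsq
    exact hsq.mul_left _
  have hbound {s : ℝ} (hs : s ∈ Set.Icc 1 2) (n : ℕ) : ‖term s n‖ ≤ bound n := by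
    grw [norm_one_div_cpow_sub_one_div_cpow_le hc (min_le_left ..) (min_le_right ..) hs.1 hs.2 n,
      norm_real, Real.norm_of_nonneg (by linarith [hs.1]), hs.2]
  have hcont (n : ℕ) : ContinuousAt (term · n) 1 := by
    have hn : (0 : ℝ) ≤ n := n.cast_nonneg
    have hleft : (n + a : ℂ) ≠ 0 := by exact_mod_cast (add_pos_of_nonneg_of_pos hn ha.1).ne'
    have hright : (n + 1 - a : ℂ) ≠ 0 := by
      exact_mod_cast (show (0 : ℝ) < n + 1 - a by linarith [ha.2]).ne'
    exact ((continuous_one_div_cpow_ofReal hleft).sub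
      (continuous_one_div_cpow_ofReal hright)).continuousAt
  have hcot : ∑' n, term 1 n = π * cot (π * a) := by
    have hsum := (hsummable.of_norm_bounded (hbound ⟨le_rfl, one_le_two⟩)).hasSum.tendsto_sum_nat
    refine tendsto_nhds_unique hsum ?_
    simpa only [hterm, ofReal_one, cpow_one] using
      tendsto_sum_one_div_add_sub_one_div_sub (ofReal_mem_integerComplement_of_mem_Ioo ha)
  rw [← hcot]
  refine tendsto_tsum_of_dominated_convergence hsummable
    (fun n ↦ (hcont n).continuousWithinAt) ?_
  filter_upwards [Ioc_mem_nhdsGT one_lt_two] with s hs using hbound ⟨hs.1.le, hs.2⟩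

theorem hurwitzZetaOdd_one {a : ℝ} (ha : a ∈ Set.Ioo 0 1) :
    hurwitzZetaOdd a 1 = π / 2 * cot (π * a) := by
  have hcont : Continuous fun s : ℝ ↦ hurwitzZetaOdd a s :=
    (differentiable_hurwitzZetaOdd a).continuous.comp continuous_ofReal
  have hleft : Tendsto (fun s : ℝ ↦ hurwitzZetaOdd a s) (𝓝[>] 1) (𝓝 (hurwitzZetaOdd a 1)) :=
    (hcont.tendsto' 1 _ (by simp)).mono_left nhdsWithin_le_nhds
  have hright := (tendsto_tsum_one_div_cpow_sub_one_div_cpow ha).div_const 2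
  rw [tendsto_nhds_unique_of_eventuallyEq hleft hright ?_, mul_div_right_comm]
  filter_upwards [self_mem_nhdsWithin] with s hs
  have hs' : 1 < re (s : ℂ) := hs
  rw [← tsum_div_const]
  exact (hasSum_nat_hurwitzZetaOdd_of_mem_Icc (Set.Ioo_subset_Icc_self ha) hs').tsum_eq.symm

theorem LFunction_one_of_odd {N : ℕ} [NeZero N] {Φ : ZMod N → ℂ} (hΦ : Φ.Odd) :
    ZMod.LFunction Φ 1 =
      π / (2 * N) * ∑ j : ZMod N, Φ j * cot (π * (j.val / N : ℝ)) := by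
  rw [ZMod.LFunction_def_odd hΦ, cpow_neg_one, Finset.mul_sum, Finset.mul_sum]
  refine Finset.sum_congr rfl fun j _ ↦ ?_
  rcases eq_or_ne j 0 with rfl | hj
  · simp [hΦ.map_zero]
  have hval : (j.val / N : ℝ) ∈ Set.Ioo 0 1 := by
    have hN := NeZero.pos N
    have hj_pos := ZMod.val_pos.mpr hj
    exact ⟨by positivity, (div_lt_one (by positivity)).mpr (mod_cast j.val_lt)⟩
  rw [ZMod.toAddCircle_apply, hurwitzZetaOdd_one hval]
  field_simp

end CotangentValue

section ModThree

open DirichletCharacter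

/-- The nontrivial Dirichlet character modulo 3, obtained by casting the integer-valued quadratic
character; it equals `1` exactly at the primes `p ≡ 1 (mod 3)` that the theorem is about. -/
noncomputable def quadraticCharModThree : DirichletCharacter ℂ 3 :=
  (quadraticChar (ZMod 3)).ringHomComp (Int.castRingHom ℂ)

lemma quadraticCharModThree_isQuadratic : quadraticCharModThree.IsQuadratic :=
  (quadraticChar_isQuadratic (ZMod 3)).comp _

lemma quadraticCharModThree_two : quadraticCharModThree 2 = -1 := by
  have htwo : quadraticChar (ZMod 3) 2 = -1 := by decide
  simp [quadraticCharModThree, htwo]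

lemma quadraticCharModThree_natCast_eq_one_iff {n : ℕ} :
    quadraticCharModThree n = 1 ↔ n % 3 = 1 := by
  have hdec : ∀ x : ZMod 3, quadraticChar (ZMod 3) x = 1 ↔ x = 1 := by decide
  rw [quadraticCharModThree, MulChar.ringHomComp_apply, eq_intCast, Int.cast_eq_one, hdec,
    ← Nat.cast_one, ZMod.natCast_eq_natCast_iff']

lemma quadraticCharModThree_ne_one : quadraticCharModThree ≠ 1 := by
  intro h
  have htwo := quadraticCharModThree_two
  rw [h, MulChar.one_apply (by decide)] at htwo
  norm_num at htwo

lemma quadraticCharModThree_odd : quadraticCharModThree.Odd := quadraticCharModThree_two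

lemma cot_pi_div_three : cot (π / 3) = √3 / 3 := by
  have hreal : Real.cot (π / 3) = √3 / 3 := by
    rw [Real.cot_eq_cos_div_sin, Real.cos_pi_div_three, Real.sin_pi_div_three]
    field_simp
    norm_num
  exact_mod_cast congrArg ofReal hreal

lemma cot_pi_sub (z : ℂ) : cot (π - z) = -cot z := by
  rw [cot, cos_pi_sub, sin_pi_sub, neg_div, cot]

lemma LFunction_quadraticCharModThree_one :
    LFunction quadraticCharModThree 1 = √3 * π / 9 := by
  have hsum (f : ZMod 3 → ℂ) : ∑ j, f j = f 0 + f 1 + f 2 := Fin.sum_univ_three f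
  have hval : (2 : ZMod 3).val = 2 := rfl
  have hcot_one : cot (π * (1 / 3)) = √3 / 3 := by rw [mul_one_div, cot_pi_div_three]
  have hcot_two : cot (π * (2 / 3)) = -(√3 / 3) := by
    rw [← hcot_one, ← cot_pi_sub]
    congr 1
    ring
  rw [LFunction, LFunction_one_of_odd quadraticCharModThree_odd.to_fun, hsum, MulChar.map_zero,
    map_one, quadraticCharModThree_two, ZMod.val_one, hval]
  push_cast
  rw [hcot_one, hcot_two]
  ring

lemma LFunctionTrivChar_three_two : LFunctionTrivChar 3 2 = 4 * π ^ 2 / 27 := by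
  rw [LFunctionTrivChar_eq_mul_riemannZeta (by norm_num), Nat.prime_three.primeFactors,
    Finset.prod_singleton, riemannZeta_two, cpow_neg, cpow_ofNat]
  push_cast
  ring

end ModThree

theorem euler_product_residue_mod3 :
    Filter.Tendsto
      (fun s : ℝ =>
        (s - 1) * ∏' p : {p : ℕ // p.Prime ∧ p % 3 = 1}, ((1 - (p : ℝ) ^ (-s))⁻¹) ^ 2)
      (nhdsWithin 1 (Set.Ioi 1))
      (nhds ((Real.sqrt 3 / (2 * Real.pi)) *
        ∏' p : {p : ℕ // p.Prime ∧ p % 3 = 1}, (1 - ((p : ℝ) ^ 2)⁻¹)⁻¹)) := by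
  have hlim := (tendsto_sub_one_mul_partialEulerProduct_sq quadraticCharModThree_isQuadratic
    quadraticCharModThree_ne_one).comp (tendsto_ofReal_nhdsGT 1)
  simp only [quadraticCharModThree_natCast_eq_one_iff] at hlim
  have hconst : (1 - (3 : ℂ)⁻¹) * (√3 * π / 9) / (4 * π ^ 2 / 27) =
      (√3 / (2 * π) : ℝ) := by
    have hpi : (π : ℂ) ≠ 0 := ofReal_ne_zero.mpr Real.pi_ne_zero
    push_cast
    field_simp
    norm_num
  rw [Nat.prime_three.primeFactors, Finset.prod_singleton, Nat.cast_ofNat,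
    LFunction_quadraticCharModThree_one, LFunctionTrivChar_three_two, hconst,
    partialEulerProduct_two, ← ofReal_mul] at hlim
  rw [← tendsto_ofReal_iff]
  refine hlim.congr' ?_
  filter_upwards [self_mem_nhdsWithin] with s hs
  rw [Function.comp_apply, partialEulerProduct_ofReal_sq _ hs]
  push_cast
  rfl
end
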